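/- Let R be a smooth function on a neighborhood of the origin in ℝ² with R(0,0) = 0 and nonvanishing Taylor series, let M > 0, and set α = α_M(R). Then for every r ∈ ℝ and every ε > 0 there exists δ > 0 such that |R(x,y) − R_M(x,y)| < ε x^α for all (x,y) with 0 < x < δ and (r − δ) x^M < y < (r + δ) x^M. -/

import Mathlib

open MeasureTheory Set Filter Topology

noncomputable section

/-- Iterated partial derivative `∂ₓᵃ ∂ᵧᵇ R` at `(x, y)`. -/
def pderiv2 (R : ℝ → ℝ → ℝ) (a b : ℕ) (x y : ℝ) : ℝ :=
  iteratedDeriv a (fun x' => iteratedDeriv b (fun y' => R x' y') y) x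

/-- Taylor coefficient `R_{ab} = ∂ₓᵃ ∂ᵧᵇ R(0,0) / (a! b!)`. -/
def tcoeff (R : ℝ → ℝ → ℝ) (a b : ℕ) : ℝ :=
  pderiv2 R a b 0 0 / (Nat.factorial a * Nat.factorial b)

/-- The support of the Taylor series of `R` at the origin. -/
def tsupp (R : ℝ → ℝ → ℝ) : Set (ℕ × ℕ) := {p | tcoeff R p.1 p.2 ≠ 0}

/-- The Newton polygon of `R`. -/
def newtonPolygon (R : ℝ → ℝ → ℝ) : Set (ℝ × ℝ) :=
  convexHull ℝ (⋃ p ∈ tsupp R, {q : ℝ × ℝ | (p.1 : ℝ) ≤ q.1 ∧ (p.2 : ℝ) ≤ q.2})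

/-- The Newton distance of `R`. -/
def newtonDist (R : ℝ → ℝ → ℝ) : ℝ := sInf {t : ℝ | (t, t) ∈ newtonPolygon R}

/-- `e` is a compact edge of `N(R)` of slope `-1/M` (with `M > 0`): it is the
(one-dimensional, compact) face of the Newton polygon cut out by a supporting line
`t₁ + M t₂ = c`. -/
def IsCompactEdge (R : ℝ → ℝ → ℝ) (M : ℝ) (e : Set (ℝ × ℝ)) : Prop :=
  0 < M ∧ ∃ c : ℝ, (∀ q ∈ newtonPolygon R, c ≤ q.1 + M * q.2) ∧
    e = {q ∈ newtonPolygon R | q.1 + M * q.2 = c} ∧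
    ∃ v w : ℝ × ℝ, v ≠ w ∧ e = segment ℝ v w

/-- The edge polynomial `R_e(x,y) = Σ_{(a,b) ∈ e ∩ supp R} R_{ab} x^a y^b`. -/
def edgePoly (R : ℝ → ℝ → ℝ) (e : Set (ℝ × ℝ)) (x y : ℝ) : ℝ :=
  ∑' p : ℕ × ℕ,
    Set.indicator {p : ℕ × ℕ | ((p.1 : ℝ), (p.2 : ℝ)) ∈ e}
      (fun p => tcoeff R p.1 p.2 * x ^ p.1 * y ^ p.2) p

/-- `p` has a zero of order exactly `m` at `y₀`. -/
def ZeroOfOrder (p : ℝ → ℝ) (m : ℕ) (y₀ : ℝ) : Prop :=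
  (∀ j < m, iteratedDeriv j p y₀ = 0) ∧ iteratedDeriv m p y₀ ≠ 0

/-- `R` is in nonadapted coordinates: the bisectrix meets the interior of a compact
edge `e` such that `R_e(1, ⬝)` has a real zero of order greater than `d(R)`. -/
def IsNonadapted (R : ℝ → ℝ → ℝ) : Prop :=
  ∃ (M : ℝ) (e : Set (ℝ × ℝ)) (v w : ℝ × ℝ), IsCompactEdge R M e ∧ v ≠ w ∧
    e = segment ℝ v w ∧ (∃ t : ℝ, (t, t) ∈ openSegment ℝ v w) ∧
    ∃ (y₀ : ℝ) (m : ℕ), newtonDist R < (m : ℝ) ∧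
      ZeroOfOrder (fun y => edgePoly R e 1 y) m y₀

/-- `R` is in generic adapted coordinates: adapted coordinates, every compact edge has slope
at least `-1`, and the Newton polygon meets the `t₂`-axis. -/
def GenericAdapted (R : ℝ → ℝ → ℝ) : Prop :=
  ¬ IsNonadapted R ∧ (∀ M e, IsCompactEdge R M e → 1 ≤ M) ∧
    ∃ t : ℝ, ((0 : ℝ), t) ∈ newtonPolygon R

/-- `α_M(R) = min {a + M b : (a,b) ∈ supp R}`. -/
def alphaM (R : ℝ → ℝ → ℝ) (M : ℝ) : ℝ :=
  sInf {t : ℝ | ∃ p ∈ tsupp R, t = (p.1 : ℝ) + M * p.2}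

/-- `R_M`, the sum of the terms of the Taylor series of `R` of minimal `M`-weighted degree. -/
def RMpart (R : ℝ → ℝ → ℝ) (M : ℝ) (x y : ℝ) : ℝ :=
  ∑' p : ℕ × ℕ,
    Set.indicator {p : ℕ × ℕ | p ∈ tsupp R ∧ (p.1 : ℝ) + M * p.2 = alphaM R M}
      (fun p => tcoeff R p.1 p.2 * x ^ p.1 * y ^ p.2) p

/-- The Hessian determinant of `f`. -/
def hessDet (f : ℝ → ℝ → ℝ) (x y : ℝ) : ℝ :=
  pderiv2 f 2 0 x y * pderiv2 f 0 2 x y - (pderiv2 f 1 1 x y) ^ 2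

/-- `F*(x,y) = (Σ_{(a,b) vertex of N(F)} x^{2a} y^{2b})^{1/2}`. -/
def vertexFn (F : ℝ → ℝ → ℝ) (x y : ℝ) : ℝ :=
  Real.sqrt (∑' p : ℕ × ℕ,
    Set.indicator
      {p : ℕ × ℕ | ((p.1 : ℝ), (p.2 : ℝ)) ∈ (newtonPolygon F).extremePoints ℝ}
      (fun p => x ^ (2 * p.1) * y ^ (2 * p.2)) p)

/-!
On a horn `|y| ≤ K x ^ M` a monomial `xᵃ yᵇ` is `O(x ^ (a + M b))`, hence `o(x ^ α)` as soon as its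
weighted degree exceeds `α = α_M(R)`. Expand `R` in `y` and then each coefficient in `x`: over a
large enough rectangle of exponents the remainder `O(|x|ᵐ⁺¹ + |y|ⁿ⁺¹)` is `o(x ^ α)`, and so is
every term of the Taylor polynomial that does not belong to `R_M`. The slivers of the statement lie
in the horn with `K = |r| + 1`.
-/

theorem taylorWithinEval_eq_taylorWithinEval_univ {E : Type*} [NormedAddCommGroup E]
    [NormedSpace ℝ E] {f : ℝ → E} {n : ℕ} {s : Set ℝ} {x₀ : ℝ} (hs : UniqueDiffOn ℝ s)
    (hx₀ : x₀ ∈ s) (hf : ContDiffAt ℝ n f x₀) (x : ℝ) :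
    taylorWithinEval f n s x₀ x = taylorWithinEval f n univ x₀ x := by
  simp only [taylor_within_apply, iteratedDerivWithin_univ]
  refine Finset.sum_congr rfl fun k hk => ?_
  have hkn : (k : WithTop ℕ∞) ≤ n := by
    exact_mod_cast Nat.le_of_lt_succ (Finset.mem_range.1 hk)
  rw [iteratedDerivWithin_eq_iteratedDeriv hs (hf.of_le hkn) hx₀]

theorem abs_sub_taylorWithinEval_univ_le {f : ℝ → ℝ} {n : ℕ} {x₀ x C : ℝ}
    (hf : ∀ t ∈ uIcc x₀ x, ContDiffAt ℝ (n + 1) f t)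
    (hC : ∀ t ∈ uIcc x₀ x, |iteratedDeriv (n + 1) f t| ≤ C) :
    |f x - taylorWithinEval f n univ x₀ x| ≤ C * |x - x₀| ^ (n + 1) / (n + 1).factorial := by
  rcases eq_or_ne x₀ x with rfl | hne
  · simp
  obtain ⟨t, ht, htaylor⟩ := taylor_mean_remainder_lagrange_iteratedDeriv hne
    fun t ht => (hf t ht).contDiffWithinAt
  have hf₀ : ContDiffAt ℝ n f x₀ := (hf x₀ left_mem_uIcc).of_le (by exact_mod_cast n.le_succ)
  rw [← taylorWithinEval_eq_taylorWithinEval_univ (uniqueDiffOn_uIcc hne) left_mem_uIcc hf₀,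
    htaylor, abs_div, abs_mul, abs_pow, Nat.abs_cast]
  gcongr
  exact hC t (uIoo_subset_uIcc_self ht)

section PartialDerivatives

variable {𝕜 E F : Type*} [NontriviallyNormedField 𝕜] [NormedAddCommGroup E] [NormedSpace 𝕜 E]
  [NormedAddCommGroup F] [NormedSpace 𝕜 F]

theorem contDiffAt_iteratedDeriv_snd {f : E → 𝕜 → F} {m n : WithTop ℕ∞} {b : ℕ} {p : E × 𝕜}
    (hf : ContDiffAt 𝕜 n (fun q : E × 𝕜 => f q.1 q.2) p) (hmn : m + b ≤ n) :
    ContDiffAt 𝕜 m (fun q : E × 𝕜 => iteratedDeriv b (f q.1) q.2) p := by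
  induction b generalizing m with
  | zero => simpa using hf.of_le (by simpa using hmn)
  | succ b ih =>
    have hb : ContDiffAt 𝕜 (m + 1) (fun q : E × 𝕜 => iteratedDeriv b (f q.1) q.2) p :=
      ih (by simpa [add_assoc, add_comm (1 : WithTop ℕ∞)] using hmn)
    have hdiff : ∀ᶠ q in 𝓝 p, DifferentiableAt 𝕜 (fun q : E × 𝕜 => iteratedDeriv b (f q.1) q.2) q :=
      ((hb.of_le le_add_self).eventually (by simp)).mono
        fun q hq => hq.differentiableAt one_ne_zero
    refine ((hb.fderiv_right le_rfl).clm_apply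
      (contDiffAt_const (c := ((0 : E), (1 : 𝕜))))).congr_of_eventuallyEq ?_
    filter_upwards [hdiff] with q hq
    have hline : HasDerivAt (fun t : 𝕜 => (q.1, t)) ((0 : E), (1 : 𝕜)) q.2 :=
      (hasDerivAt_const _ _).prodMk (hasDerivAt_id _)
    rw [iteratedDeriv_succ]
    exact (hq.hasFDerivAt.comp_hasDerivAt (f := fun t : 𝕜 => (q.1, t)) q.2 hline).deriv

end PartialDerivatives

theorem isBigO_sub_taylorWithinEval_snd {E : Type*} [NormedAddCommGroup E] [NormedSpace ℝ E]
    {f : E → ℝ → ℝ} {n : ℕ} {a : E} {y₀ : ℝ}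
    (hf : ContDiffAt ℝ (n + 1) (fun p : E × ℝ => f p.1 p.2) (a, y₀)) :
    (fun p : E × ℝ => f p.1 p.2 - taylorWithinEval (f p.1) n univ y₀ p.2)
      =O[𝓝 (a, y₀)] fun p => (p.2 - y₀) ^ (n + 1) := by
  have hslice : ∀ᶠ p in 𝓝 (a, y₀), ContDiffAt ℝ (n + 1) (f p.1) p.2 :=
    (hf.eventually (by exact_mod_cast ENat.natCast_ne_top (n + 1))).mono fun p hp =>
      ContDiffAt.comp (f := fun t : ℝ => (p.1, t)) p.2 hp (contDiffAt_const.prodMk contDiffAt_id)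
  have hcont : ContinuousAt (fun p : E × ℝ => iteratedDeriv (n + 1) (f p.1) p.2) (a, y₀) :=
    (contDiffAt_iteratedDeriv_snd (m := 0) (b := n + 1) hf (by simp)).continuousAt
  -- The Lagrange remainder is evaluated on the whole segment from `y₀` to `p.2`, so the bounds
  -- must hold on a product neighborhood with convex second factor.
  obtain ⟨C, hC⟩ := (hcont.tendsto.isBigO_one ℝ).bound
  obtain ⟨u, hu, v, hv, huv⟩ :=
    eventually_prod_iff.1 (nhds_prod_eq (x := a) (y := y₀) ▸ hslice.and hC)
  obtain ⟨ρ, hρ, hball⟩ := Metric.eventually_nhds_iff_ball.1 hv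
  refine .of_bound (C / (n + 1).factorial) ?_
  rw [nhds_prod_eq]
  filter_upwards [hu.prod_mk (Metric.ball_mem_nhds y₀ hρ)] with p ⟨hp₁, hp₂⟩
  have hsegment : ∀ t ∈ uIcc y₀ p.2, v t := fun t ht => hball t <|
    (convex_ball y₀ ρ).ordConnected.uIcc_subset (Metric.mem_ball_self hρ) hp₂ ht
  have htaylor := abs_sub_taylorWithinEval_univ_le (fun t ht => (huv hp₁ (hsegment t ht)).1)
    (fun t ht => by simpa using (huv hp₁ (hsegment t ht)).2)
  rwa [← abs_pow, mul_div_right_comm] at htaylor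

theorem isBigO_sub_taylorWithinEval_univ {f : ℝ → ℝ} {n : ℕ} {x₀ : ℝ}
    (hf : ContDiffAt ℝ (n + 1) f x₀) :
    (fun x => f x - taylorWithinEval f n univ x₀ x) =O[𝓝 x₀] fun x => (x - x₀) ^ (n + 1) :=
  (isBigO_sub_taylorWithinEval_snd (f := fun _ : ℝ => f) (a := 0)
    (ContDiffAt.comp (g := f) ((0 : ℝ), x₀) hf contDiffAt_snd)).comp_tendsto
    ((Continuous.prodMk_right (0 : ℝ)).tendsto x₀)

theorem isBigO_iteratedDeriv_snd_sub_taylorWithinEval {f : ℝ → ℝ → ℝ} {m b : ℕ} {x₀ y₀ : ℝ}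
    (hf : ContDiffAt ℝ (m + b + 1) (fun p : ℝ × ℝ => f p.1 p.2) (x₀, y₀)) :
    (fun x => iteratedDeriv b (f x) y₀ -
      taylorWithinEval (fun x => iteratedDeriv b (f x) y₀) m univ x₀ x)
      =O[𝓝 x₀] fun x => (x - x₀) ^ (m + 1) :=
  isBigO_sub_taylorWithinEval_univ <| ContDiffAt.comp (f := fun x : ℝ => (x, y₀)) x₀
    (contDiffAt_iteratedDeriv_snd hf (add_right_comm _ _ _).le)
    (contDiffAt_id.prodMk contDiffAt_const)

/-- The term `R_{ab} xᵃ yᵇ` of the Taylor series of `R` at the origin, where `q = (a, b)` and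
`p = (x, y)`. -/
def taylorTerm (R : ℝ → ℝ → ℝ) (q : ℕ × ℕ) (p : ℝ × ℝ) : ℝ :=
  tcoeff R q.1 q.2 * p.1 ^ q.1 * p.2 ^ q.2

theorem sum_taylorTerm_range_product (R : ℝ → ℝ → ℝ) (m n : ℕ) (p : ℝ × ℝ) :
    ∑ q ∈ Finset.range (m + 1) ×ˢ Finset.range (n + 1), taylorTerm R q p =
      ∑ b ∈ Finset.range (n + 1), ((b.factorial : ℝ)⁻¹ * p.2 ^ b) *
        taylorWithinEval (fun x => iteratedDeriv b (R x) 0) m univ 0 p.1 := by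
  simp only [Finset.sum_product_right, taylor_within_apply, Finset.mul_sum,
    iteratedDerivWithin_univ, sub_zero, smul_eq_mul]
  refine Finset.sum_congr rfl fun b _ => Finset.sum_congr rfl fun a _ => ?_
  rw [taylorTerm, tcoeff, pderiv2]
  field_simp

theorem isBigO_sub_sum_taylorTerm {R : ℝ → ℝ → ℝ} {m n : ℕ}
    (hR : ContDiffAt ℝ (m + n + 1) (fun p : ℝ × ℝ => R p.1 p.2) (0, 0)) :
    (fun p : ℝ × ℝ => R p.1 p.2 -
      ∑ q ∈ Finset.range (m + 1) ×ˢ Finset.range (n + 1), taylorTerm R q p)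
      =O[𝓝 (0, 0)] fun p => |p.1 ^ (m + 1)| + |p.2 ^ (n + 1)| := by
  have hy : (fun p : ℝ × ℝ => R p.1 p.2 - taylorWithinEval (R p.1) n univ 0 p.2)
      =O[𝓝 (0, 0)] fun p => p.2 ^ (n + 1) := by
    simpa using isBigO_sub_taylorWithinEval_snd (n := n)
      (hR.of_le (by exact_mod_cast (by omega : n + 1 ≤ m + n + 1)))
  have hx (b : ℕ) (hb : b ∈ Finset.range (n + 1)) :
      (fun p : ℝ × ℝ => ((b.factorial : ℝ)⁻¹ * p.2 ^ b) * (iteratedDeriv b (R p.1) 0 -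
        taylorWithinEval (fun x => iteratedDeriv b (R x) 0) m univ 0 p.1))
      =O[𝓝 (0, 0)] fun p => p.1 ^ (m + 1) := by
    have hb' : m + b + 1 ≤ m + n + 1 := by linarith [Finset.mem_range_succ_iff.1 hb]
    have hcoeff := isBigO_iteratedDeriv_snd_sub_taylorWithinEval (hR.of_le (by exact_mod_cast hb'))
    have hbdd : (fun p : ℝ × ℝ => (b.factorial : ℝ)⁻¹ * p.2 ^ b)
        =O[𝓝 (0, 0)] fun _ => (1 : ℝ) :=
      (Continuous.tendsto (by fun_prop) _).isBigO_one ℝ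
    simpa using hbdd.mul (hcoeff.comp_tendsto (continuous_fst.tendsto ((0 : ℝ), (0 : ℝ))))
  have hbound_fst : (fun p : ℝ × ℝ => p.1 ^ (m + 1))
      =O[𝓝 (0, 0)] fun p => |p.1 ^ (m + 1)| + |p.2 ^ (n + 1)| :=
    .of_norm_le fun p => le_add_of_nonneg_right (abs_nonneg _)
  have hbound_snd : (fun p : ℝ × ℝ => p.2 ^ (n + 1))
      =O[𝓝 (0, 0)] fun p => |p.1 ^ (m + 1)| + |p.2 ^ (n + 1)| :=
    .of_norm_le fun p => le_add_of_nonneg_left (abs_nonneg _)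
  refine ((hy.trans hbound_snd).add
    (Asymptotics.IsBigO.fun_sum fun b hb => (hx b hb).trans hbound_fst)).congr_left fun p => ?_
  simp only [sum_taylorTerm_range_product, mul_sub, Finset.sum_sub_distrib,
    taylor_within_apply (R p.1), iteratedDerivWithin_univ, sub_zero, smul_eq_mul]
  ring

section Horn

variable {M : ℝ}

/-- The filter of the approach to the origin through the horn `0 < x`, `|y| ≤ K x ^ M`: its
basic sets cut this horn off at `x < δ`. -/
def hornFilter (M K : ℝ) : Filter (ℝ × ℝ) :=
  comap Prod.fst (𝓝[>] 0) ⊓ 𝓟 {p | |p.2| ≤ K * p.1 ^ M}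

theorem eventually_hornFilter_iff {K : ℝ} {P : ℝ × ℝ → Prop} :
    (∀ᶠ p in hornFilter M K, P p) ↔
      ∃ δ > 0, ∀ x y, 0 < x → x < δ → |y| ≤ K * x ^ M → P (x, y) := by
  simp [hornFilter, (((nhdsGT_basis (0 : ℝ)).comap Prod.fst).inf_principal _).eventually_iff]

theorem tendsto_fst_hornFilter (M K : ℝ) : Tendsto Prod.fst (hornFilter M K) (𝓝[>] 0) :=
  tendsto_comap.mono_left inf_le_left

theorem eventually_fst_pos_hornFilter (M K : ℝ) : ∀ᶠ p in hornFilter M K, 0 < p.1 :=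
  (tendsto_fst_hornFilter M K).eventually eventually_mem_nhdsWithin

theorem eventually_abs_snd_le_hornFilter (M K : ℝ) :
    ∀ᶠ p in hornFilter M K, |p.2| ≤ K * p.1 ^ M :=
  mem_inf_of_right (mem_principal_self _)

theorem tendsto_rpow_fst_hornFilter {γ : ℝ} (hγ : 0 < γ) (M K : ℝ) :
    Tendsto (fun p : ℝ × ℝ => p.1 ^ γ) (hornFilter M K) (𝓝 0) := by
  simpa [Real.zero_rpow hγ.ne'] using
    ((tendsto_fst_hornFilter M K).mono_right nhdsWithin_le_nhds).rpow_const (Or.inr hγ.le)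

theorem hornFilter_le_nhds (hM : 0 < M) (K : ℝ) : hornFilter M K ≤ 𝓝 (0, 0) := by
  have hy : Tendsto Prod.snd (hornFilter M K) (𝓝 0) :=
    squeeze_zero_norm' (eventually_abs_snd_le_hornFilter M K)
      (by simpa using (tendsto_rpow_fst_hornFilter hM M K).const_mul K)
  exact ((tendsto_fst_hornFilter M K).mono_right nhdsWithin_le_nhds).prodMk_nhds hy

/-- The `M`-weighted degree `a + M b` of the monomial `xᵃ yᵇ`, where `q = (a, b)`. -/
def weightedDegree (M : ℝ) (q : ℕ × ℕ) : ℝ := q.1 + M * q.2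

theorem isBigO_monomial_hornFilter (M K : ℝ) (q : ℕ × ℕ) :
    (fun p : ℝ × ℝ => p.1 ^ q.1 * p.2 ^ q.2)
      =O[hornFilter M K] fun p => p.1 ^ weightedDegree M q := by
  refine .of_bound (K ^ q.2) ?_
  filter_upwards [eventually_fst_pos_hornFilter M K, eventually_abs_snd_le_hornFilter M K]
    with ⟨x, y⟩ hx hy
  calc ‖x ^ q.1 * y ^ q.2‖ = x ^ q.1 * |y| ^ q.2 := by simp [abs_of_pos hx]
    _ ≤ x ^ q.1 * (K * x ^ M) ^ q.2 := by gcongr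
    _ = K ^ q.2 * ‖x ^ weightedDegree M q‖ := by
      rw [Real.norm_of_nonneg (Real.rpow_nonneg hx.le _), weightedDegree, Real.rpow_add hx,
        Real.rpow_natCast, Real.rpow_mul hx.le, Real.rpow_natCast]
      ring

theorem isLittleO_rpow_fst_hornFilter {α β : ℝ} (hαβ : α < β) (M K : ℝ) :
    (fun p : ℝ × ℝ => p.1 ^ β) =o[hornFilter M K] fun p => p.1 ^ α := by
  refine Asymptotics.isLittleO_iff_exists_eq_mul.2
    ⟨fun p => p.1 ^ (β - α), tendsto_rpow_fst_hornFilter (sub_pos.2 hαβ) M K, ?_⟩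
  filter_upwards [eventually_fst_pos_hornFilter M K] with p hp
  rw [Pi.mul_apply, ← Real.rpow_add hp, sub_add_cancel]

theorem isLittleO_monomial_hornFilter {α : ℝ} {q : ℕ × ℕ} (hq : α < weightedDegree M q) (K : ℝ) :
    (fun p : ℝ × ℝ => p.1 ^ q.1 * p.2 ^ q.2) =o[hornFilter M K] fun p => p.1 ^ α :=
  (isBigO_monomial_hornFilter M K q).trans_isLittleO (isLittleO_rpow_fst_hornFilter hq M K)

theorem isLittleO_sub_sum_taylorTerm_hornFilter (hM : 0 < M) {R : ℝ → ℝ → ℝ} {m n : ℕ}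
    (hR : ContDiffAt ℝ (m + n + 1) (fun p : ℝ × ℝ => R p.1 p.2) (0, 0)) {α : ℝ}
    (hm : α < (m + 1 : ℕ)) (hn : α < M * (n + 1 : ℕ)) (K : ℝ) :
    (fun p : ℝ × ℝ => R p.1 p.2 -
      ∑ q ∈ Finset.range (m + 1) ×ˢ Finset.range (n + 1), taylorTerm R q p)
      =o[hornFilter M K] fun p => p.1 ^ α := by
  have hx : (fun p : ℝ × ℝ => p.1 ^ (m + 1)) =o[hornFilter M K] fun p => p.1 ^ α := by
    simpa using isLittleO_monomial_hornFilter (q := (m + 1, 0))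
      (by simpa [weightedDegree] using hm) K
  have hy : (fun p : ℝ × ℝ => p.2 ^ (n + 1)) =o[hornFilter M K] fun p => p.1 ^ α := by
    simpa using isLittleO_monomial_hornFilter (q := (0, n + 1))
      (by simpa [weightedDegree] using hn) K
  exact ((isBigO_sub_sum_taylorTerm hR).mono (hornFilter_le_nhds hM K)).trans_isLittleO
    (hx.abs_left.add hy.abs_left)

end Horn

section LeadingPart

variable {R : ℝ → ℝ → ℝ} {M : ℝ}

theorem alphaM_le_weightedDegree (hM : 0 ≤ M) {q : ℕ × ℕ} (hq : q ∈ tsupp R) :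
    alphaM R M ≤ weightedDegree M q := by
  refine csInf_le ⟨0, ?_⟩ ⟨q, hq, rfl⟩
  rintro _ ⟨q, -, rfl⟩
  positivity

theorem RMpart_eq_sum_filter {s : Finset (ℕ × ℕ)}
    (hs : ∀ q, weightedDegree M q = alphaM R M → q ∈ s) (p : ℝ × ℝ) :
    RMpart R M p.1 p.2 = ∑ q ∈ s with weightedDegree M q = alphaM R M, taylorTerm R q p := by
  rw [RMpart, tsum_eq_sum fun q hq => indicator_of_notMem (fun h => hq (hs q h.2)) _,
    Finset.sum_filter]
  refine Finset.sum_congr rfl fun q _ => ?_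
  rw [indicator]
  split_ifs <;> simp_all [tsupp, taylorTerm, weightedDegree]

theorem isLittleO_taylorTerm_hornFilter (hM : 0 ≤ M) {q : ℕ × ℕ}
    (hq : weightedDegree M q ≠ alphaM R M) (K : ℝ) :
    taylorTerm R q =o[hornFilter M K] fun p => p.1 ^ alphaM R M := by
  by_cases hcoeff : tcoeff R q.1 q.2 = 0
  · have hzero : taylorTerm R q = fun _ => 0 := by simp [funext_iff, taylorTerm, hcoeff]
    exact hzero ▸ Asymptotics.isLittleO_zero _ _
  have hlt : alphaM R M < weightedDegree M q :=
    (alphaM_le_weightedDegree hM hcoeff).lt_of_ne' hq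
  exact ((isLittleO_monomial_hornFilter hlt K).const_mul_left (tcoeff R q.1 q.2)).congr_left
    fun p => (mul_assoc _ _ _).symm

theorem mem_range_product_of_weightedDegree_lt (hM : 0 < M) {m n : ℕ} {q : ℕ × ℕ}
    (hm : weightedDegree M q < m) (hn : weightedDegree M q < M * n) :
    q ∈ Finset.range m ×ˢ Finset.range n := by
  have hsnd : 0 ≤ M * (q.2 : ℝ) := by positivity
  rw [weightedDegree] at hm hn
  have h₁ : (q.1 : ℝ) < m := by linarith
  have h₂ : (q.2 : ℝ) < n := lt_of_mul_lt_mul_left (by linarith [q.1.cast_nonneg (α := ℝ)]) hM.le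
  simpa using And.intro (Nat.cast_lt.1 h₁) (Nat.cast_lt.1 h₂)

theorem isLittleO_sub_RMpart_hornFilter (hM : 0 < M)
    (hR : ContDiffAt ℝ (⊤ : ℕ∞) (fun p : ℝ × ℝ => R p.1 p.2) (0, 0)) (K : ℝ) :
    (fun p : ℝ × ℝ => R p.1 p.2 - RMpart R M p.1 p.2)
      =o[hornFilter M K] fun p => p.1 ^ alphaM R M := by
  obtain ⟨m, hm⟩ : ∃ m : ℕ, alphaM R M < (m + 1 : ℕ) :=
    (exists_nat_gt _).imp fun m hm => hm.trans (by simp)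
  obtain ⟨n, hn⟩ : ∃ n : ℕ, alphaM R M < M * (n + 1 : ℕ) :=
    (exists_nat_gt (alphaM R M / M)).imp fun n hn =>
      ((div_lt_iff₀' hM).1 hn).trans (by gcongr; simp)
  set box := Finset.range (m + 1) ×ˢ Finset.range (n + 1)
  have hremainder := isLittleO_sub_sum_taylorTerm_hornFilter hM
    (hR.of_le (by exact_mod_cast le_top) : ContDiffAt ℝ (m + n + 1) _ _) hm hn K
  have hterms : (fun p : ℝ × ℝ => ∑ q ∈ box with weightedDegree M q ≠ alphaM R M,
      taylorTerm R q p) =o[hornFilter M K] fun p => p.1 ^ alphaM R M :=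
    Asymptotics.IsLittleO.fun_sum fun q hq =>
      isLittleO_taylorTerm_hornFilter hM.le (Finset.mem_filter.1 hq).2 K
  refine (hremainder.add hterms).congr_left fun p => ?_
  rw [RMpart_eq_sum_filter (s := box) fun q hq =>
    mem_range_product_of_weightedDegree_lt hM (hq ▸ hm) (hq ▸ hn),
    ← Finset.sum_filter_add_sum_filter_not box (fun q => weightedDegree M q = alphaM R M)]
  ring

end LeadingPart

/-- Lemma 2.3: on the sliver `0 < x < δ`, `(r-δ)x^M < y < (r+δ)x^M`, the difference
`|R - R_M|` is at most `ε x^α` where `α = α_M(R)`. -/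
theorem stmt_4 (R : ℝ → ℝ → ℝ) (U₀ : Set (ℝ × ℝ)) (hU₀ : U₀ ∈ 𝓝 ((0 : ℝ), (0 : ℝ)))
    (hsm : ContDiffOn ℝ (⊤ : ℕ∞) (fun p : ℝ × ℝ => R p.1 p.2) U₀)
    (h0 : R 0 0 = 0) (hts : (tsupp R).Nonempty)
    (M : ℝ) (hM : 0 < M) :
    ∀ r : ℝ, ∀ ε > (0 : ℝ), ∃ δ > (0 : ℝ), ∀ x y : ℝ,
      0 < x → x < δ → (r - δ) * x ^ M < y → y < (r + δ) * x ^ M →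
      |R x y - RMpart R M x y| < ε * x ^ alphaM R M := by
  intro r ε hε
  have hR : ContDiffAt ℝ (⊤ : ℕ∞) (fun p : ℝ × ℝ => R p.1 p.2) (0, 0) := hsm.contDiffAt hU₀
  obtain ⟨δ, hδ, hbound⟩ := eventually_hornFilter_iff.1
    ((isLittleO_sub_RMpart_hornFilter hM hR (|r| + 1)).bound (half_pos hε))
  refine ⟨min δ 1, by positivity, fun x y hx hxδ hy₁ hy₂ => ?_⟩
  have hy : |y| ≤ (|r| + 1) * x ^ M := by
    have hδ₁ : min δ 1 ≤ 1 := min_le_right _ _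
    rw [abs_le, ← neg_mul]
    refine ⟨le_trans ?_ hy₁.le, hy₂.le.trans ?_⟩ <;> gcongr
    · linarith [neg_abs_le r]
    · exact le_abs_self r
  have hxα : 0 < x ^ alphaM R M := Real.rpow_pos_of_pos hx _
  calc |R x y - RMpart R M x y| ≤ ε / 2 * x ^ alphaM R M := by
        simpa [abs_of_pos hxα] using hbound x y hx (hxδ.trans_le (min_le_left _ _)) hy
    _ < ε * x ^ alphaM R M := by gcongr; linarith

end
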